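/- Let ψ be an n-qubit stabilizer state with independent generating set s_1, g_2, …, g_n of 𝒮(ψ) such that Z_1 anticommutes with s_1 and commutes with each g_i (i ≥ 2), let 𝒢 be the group generated by {g_2,…,g_n}, and let φ = T_1ψ. Let M ∈ 𝒫_n be Hermitian and suppose M anticommutes with at least one element of 𝒢. Then for any m ∈ {+1,−1} with Πφ ≠ 0, where Π = (I + mM)/2, the normalized post-measurement state Πφ/‖Πφ‖ is NOT a stabilizer state. -/

import Mathlib

noncomputable section
namespace PaperFormal

open Matrix

/-- The space of `n`-qubit operators: matrices indexed by computational basis states. -/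
abbrev QMat (n : ℕ) := Matrix (Fin n → Fin 2) (Fin n → Fin 2) ℂ

/-- The space of `n`-qubit state vectors. -/
abbrev QVec (n : ℕ) := (Fin n → Fin 2) → ℂ

def σI : Matrix (Fin 2) (Fin 2) ℂ := 1
def σX : Matrix (Fin 2) (Fin 2) ℂ := !![0, 1; 1, 0]
def σY : Matrix (Fin 2) (Fin 2) ℂ := !![0, -Complex.I; Complex.I, 0]
def σZ : Matrix (Fin 2) (Fin 2) ℂ := !![1, 0; 0, -1]

def IsPauliFactor (m : Matrix (Fin 2) (Fin 2) ℂ) : Prop :=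
  m = σI ∨ m = σX ∨ m = σY ∨ m = σZ

/-- Kronecker product over `n` qubits of single-qubit matrices. -/
def kron {n : ℕ} (σ : Fin n → Matrix (Fin 2) (Fin 2) ℂ) : QMat n :=
  fun v w => ∏ j, σ j (v j) (w j)

/-- Membership in the `n`-qubit Pauli group `𝒫_n`:
`M = i^k σ_1 ⊗ ⋯ ⊗ σ_n` with each `σ_j ∈ {I, X, Y, Z}`. -/
def IsPauli {n : ℕ} (M : QMat n) : Prop :=
  ∃ (k : Fin 4) (σ : Fin n → Matrix (Fin 2) (Fin 2) ℂ),
    (∀ j, IsPauliFactor (σ j)) ∧ M = Complex.I ^ (k : ℕ) • kron σ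

/-- A Pauli operator supported on the set `A` of qubits (identity factors outside `A`). -/
def PauliSupportedOn {n : ℕ} (M : QMat n) (A : Set (Fin n)) : Prop :=
  ∃ (k : Fin 4) (σ : Fin n → Matrix (Fin 2) (Fin 2) ℂ),
    (∀ j, IsPauliFactor (σ j)) ∧ (∀ j, j ∉ A → σ j = σI) ∧
    M = Complex.I ^ (k : ℕ) • kron σ

/-- The Pauli `M` has identity (`j`-th Kronecker factor proportional to identity) at qubit `j`. -/
def PauliTrivialAt {n : ℕ} (M : QMat n) (j : Fin n) : Prop :=
  PauliSupportedOn M {i | i ≠ j}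

/-- The single-qubit operator `m` placed at qubit `j` (identity elsewhere). -/
def opAt {n : ℕ} (j : Fin n) (m : Matrix (Fin 2) (Fin 2) ℂ) : QMat n :=
  kron (fun i => if i = j then m else σI)

/-- Inner product `⟨φ, ψ⟩` (antilinear in the first argument). -/
def innerC {n : ℕ} (φ ψ : QVec n) : ℂ := ∑ v, (starRingEnd ℂ) (φ v) * ψ v

/-- Squared norm `‖ψ‖²`. -/
def nrmSq {n : ℕ} (ψ : QVec n) : ℝ := ∑ v, Complex.normSq (ψ v)

/-- The stabilizer group `𝒮(ψ) = {P ∈ 𝒫_n : Pψ = ψ}`. -/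
def stabGroup {n : ℕ} (ψ : QVec n) : Set (QMat n) :=
  {P | IsPauli P ∧ P.mulVec ψ = ψ}

/-- An `n`-qubit pure stabilizer state: a unit vector whose stabilizer group has `2^n` elements. -/
def IsStabState {n : ℕ} (ψ : QVec n) : Prop :=
  nrmSq ψ = 1 ∧ (stabGroup ψ).ncard = 2 ^ n

/-- The product `∏ i, g i ^ α i` (in the fixed order of indices). -/
def prodPow {n m : ℕ} (g : Fin m → QMat n) (α : Fin m → ZMod 2) : QMat n :=
  (List.ofFn fun i => g i ^ (α i).val).prod

/-- `g` is an independent generating set of `𝒮(ψ)`: the map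
`(α_i) ↦ ∏ g_i^{α_i}` is a bijection from `(ℤ/2)^m` onto `𝒮(ψ)`. -/
def IsIndepGenSet {n m : ℕ} (ψ : QVec n) (g : Fin m → QMat n) : Prop :=
  (∀ i, g i ∈ stabGroup ψ) ∧ Function.Injective (prodPow g) ∧
    Set.range (prodPow g) = stabGroup ψ

/-- The `T` gate `diag(1, e^{iπ/4})`. -/
def Tgate : Matrix (Fin 2) (Fin 2) ℂ :=
  !![1, 0; 0, Complex.exp (Real.pi * Complex.I / 4)]

/-!
The stabilizer operators `s₁` and `Q` fix `ψ`; multiplying `s₁` by `Q` if necessary gives a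
stabilizer `P` of `ψ` that anticommutes with `Z₁` and commutes with `M`. The gate `diag(1, e^{iθ})`
turns the expectation of `P` from `1` into `cos θ`, and the projection onto an outcome of `M` keeps
this ratio: the extra terms anticommute with the stabilizer `Q` of `φ`, so they have expectation
zero. A Hermitian Pauli operator has expectation `0` or `±1` in a stabilizer state, because the
density matrix of such a state is the average of its stabilizer group and Pauli operators other
than scalars are traceless. For `θ = π / 4` the value `cos θ` is none of these.
-/

section Anticommute

/-- Two elements anticommute if exchanging them in a product flips the sign; the sign counterpart
of `Commute`. -/
def Anticommute {R : Type*} [Mul R] [Neg R] (a b : R) : Prop := a * b = -(b * a)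

variable {R : Type*} [Semigroup R] [HasDistribNeg R] {a b c : R}

lemma Anticommute.mul_right (hb : Anticommute a b) (hc : Anticommute a c) :
    Commute a (b * c) := by
  rw [Anticommute] at hb hc
  rw [commute_iff_eq, ← mul_assoc, hb, neg_mul, mul_assoc, hc, mul_neg, neg_neg, mul_assoc]

lemma Anticommute.mul_right_of_commute (hb : Anticommute a b) (hc : Commute a c) :
    Anticommute a (b * c) := by
  rw [Anticommute] at *
  rw [← mul_assoc, hb, neg_mul, mul_assoc, hc.eq, mul_assoc]

lemma Anticommute.mul_left_of_commute (hb : Anticommute b c) (ha : Commute a c) :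
    Anticommute (a * b) c := by
  rw [Anticommute] at *
  rw [mul_assoc, hb, mul_neg, ← mul_assoc, ha.eq, mul_assoc]

lemma Anticommute.smul_left {K R : Type*} [NonUnitalNonAssocRing R] [DistribSMul K R]
    [IsScalarTower K R R] [SMulCommClass K R R] {a b : R} (h : Anticommute a b) (k : K) :
    Anticommute (k • a) b := by
  rw [Anticommute] at *
  rw [smul_mul_assoc, h, smul_neg, mul_smul_comm]

lemma commute_or_anticommute_of_mul_self {R : Type*} [Ring R] {a b : R}
    (ha : a * a = 1 ∨ a * a = -1) (hb : b * b = 1 ∨ b * b = -1)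
    (hab : a * b * (a * b) = 1 ∨ a * b * (a * b) = -1) : Commute a b ∨ Anticommute a b := by
  have key : a * (a * b * (a * b)) * b = a * a * (b * a) * (b * b) := by simp only [mul_assoc]
  rw [commute_iff_eq, Anticommute]
  rcases ha with ha | ha <;> rcases hb with hb | hb <;> rcases hab with hab | hab <;>
    rw [ha, hb, hab] at key <;> simp_all [neg_eq_iff_eq_neg]

end Anticommute

lemma sum_mul_sum_of_mul_self {R : Type*} [Semiring R] {G : Finset R}
    (hmul : ∀ a ∈ G, ∀ b ∈ G, a * b ∈ G) (hself : ∀ a ∈ G, a * a = 1) :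
    (∑ a ∈ G, a) * ∑ b ∈ G, b = G.card • ∑ b ∈ G, b := by
  have habsorb : ∀ a ∈ G, a * ∑ b ∈ G, b = ∑ b ∈ G, b := fun a ha => by
    have hcancel : ∀ b ∈ G, a * (a * b) = b := fun b _ => by rw [← mul_assoc, hself a ha, one_mul]
    rw [Finset.mul_sum]
    exact Finset.sum_bij' (fun b _ => a * b) (fun b _ => a * b) (hmul a ha) (hmul a ha) hcancel
      hcancel fun _ _ => rfl
  rw [Finset.sum_mul, Finset.sum_congr rfl habsorb, Finset.sum_const]

section OperatorExpectation

variable {ι : Type*} [Fintype ι]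

open scoped ComplexOrder in
lemma eq_zero_of_isStarProjection_of_trace_eq_zero {A : Matrix ι ι ℂ} (hA : IsStarProjection A)
    (htr : A.trace = 0) : A = 0 := by
  rwa [← trace_conjTranspose_mul_self_eq_zero_iff, ← star_eq_conjTranspose,
    hA.isSelfAdjoint.star_eq, hA.isIdempotentElem.eq]

lemma isStarProjection_vecMulVec {χ : ι → ℂ} (hχ : star χ ⬝ᵥ χ = 1) :
    IsStarProjection (vecMulVec χ (star χ)) where
  isIdempotentElem := by
    rw [IsIdempotentElem, mul_vecMulVec, vecMulVec_mulVec, hχ, MulOpposite.op_one, one_smul]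
  isSelfAdjoint := by
    rw [IsSelfAdjoint, star_eq_conjTranspose, conjTranspose_vecMulVec, star_star]

lemma eq_vecMulVec_of_isStarProjection_of_trace_eq_one {A : Matrix ι ι ℂ}
    (hA : IsStarProjection A) (htr : A.trace = 1) {χ : ι → ℂ} (hχ : star χ ⬝ᵥ χ = 1)
    (hAχ : A *ᵥ χ = χ) : A = vecMulVec χ (star χ) := by
  have hdiff : IsStarProjection (A - vecMulVec χ (star χ)) :=
    (isStarProjection_vecMulVec hχ).sub_of_mul_eq_right hA (by rw [mul_vecMulVec, hAχ])
  refine sub_eq_zero.mp (eq_zero_of_isStarProjection_of_trace_eq_zero hdiff ?_)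
  rw [trace_sub, trace_vecMulVec, dotProduct_comm, hχ, htr, sub_self]

/-- The unnormalized expectation `⟨φ, A φ⟩` of an operator `A` in the state `φ`, bundled as a
linear functional of `A`. -/
def expect (φ : ι → ℂ) : Matrix ι ι ℂ →ₗ[ℂ] ℂ where
  toFun A := star φ ⬝ᵥ A *ᵥ φ
  map_add' A B := by rw [add_mulVec, dotProduct_add]
  map_smul' c A := by rw [smul_mulVec, dotProduct_smul, RingHom.id_apply]

lemma expect_apply (φ : ι → ℂ) (A : Matrix ι ι ℂ) : expect φ A = star φ ⬝ᵥ A *ᵥ φ := rfl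

lemma expect_mulVec (φ : ι → ℂ) (A B : Matrix ι ι ℂ) :
    expect (B *ᵥ φ) A = expect φ (Bᴴ * A * B) := by
  rw [expect_apply, expect_apply, star_mulVec, ← dotProduct_mulVec, mulVec_mulVec, mulVec_mulVec]

lemma expect_smul_left (c : ℂ) (φ : ι → ℂ) (A : Matrix ι ι ℂ) :
    expect (c • φ) A = star c * c * expect φ A := by
  simp only [expect_apply, star_smul, mulVec_smul, smul_dotProduct, dotProduct_smul, smul_eq_mul,
    mul_assoc, mul_left_comm]

lemma expect_eq_trace (φ : ι → ℂ) (A : Matrix ι ι ℂ) :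
    expect φ A = (A * vecMulVec φ (star φ)).trace := by
  rw [mul_vecMulVec, trace_vecMulVec, dotProduct_comm, expect_apply]

variable [DecidableEq ι]

lemma expect_of_mulVec_eq_smul {φ : ι → ℂ} {A : Matrix ι ι ℂ} {c : ℂ} (h : A *ᵥ φ = c • φ) :
    expect φ A = c * expect φ 1 := by
  rw [expect_apply, expect_apply, h, one_mulVec, dotProduct_smul, smul_eq_mul]

lemma expect_eq_zero_of_anticommute {φ : ι → ℂ} {A Q : Matrix ι ι ℂ} (hQ : Qᴴ * Q = 1)
    (hφ : Q *ᵥ φ = φ) (h : Anticommute A Q) : expect φ A = 0 := by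
  refine self_eq_neg.mp ?_
  calc expect φ A = expect (Q *ᵥ φ) A := by rw [hφ]
    _ = expect φ (Qᴴ * (A * Q)) := by rw [expect_mulVec, Matrix.mul_assoc]
    _ = -expect φ A := by
      rw [show A * Q = -(Q * A) from h, Matrix.mul_neg, ← Matrix.mul_assoc, hQ, Matrix.one_mul,
        map_neg]

lemma expect_projection {φ : ι → ℂ} {N Q P : Matrix ι ι ℂ} (hN : N.IsHermitian)
    (hNN : N * N = 1) (hQ : Qᴴ * Q = 1) (hφ : Q *ᵥ φ = φ) (hNQ : Anticommute N Q)
    (hPQ : Commute P Q) (hNP : Commute N P) :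
    expect (((2 : ℂ)⁻¹ • (1 + N)) *ᵥ φ) P = 2⁻¹ * expect φ P := by
  have hconj : ((2 : ℂ)⁻¹ • (1 + N))ᴴ * P * ((2 : ℂ)⁻¹ • (1 + N)) =
      (2 : ℂ)⁻¹ • (P + P * N) := by
    simp only [conjTranspose_smul, conjTranspose_add, conjTranspose_one, hN.eq, star_inv₀,
      star_ofNat, Matrix.add_mul, Matrix.mul_add, Matrix.smul_mul, Matrix.mul_smul,
      Matrix.one_mul, Matrix.mul_one, hNP.eq, Matrix.mul_assoc, hNN]
    match_scalars <;> norm_num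
  rw [expect_mulVec, hconj, map_smul, map_add,
    expect_eq_zero_of_anticommute hQ hφ (hNQ.mul_left_of_commute hPQ), add_zero, smul_eq_mul]

end OperatorExpectation

section Kronecker

variable {n : ℕ}

lemma kron_mul (σ τ : Fin n → Matrix (Fin 2) (Fin 2) ℂ) :
    kron σ * kron τ = kron fun j => σ j * τ j := by
  ext v w
  simp only [kron, mul_apply, ← Finset.prod_mul_distrib, Finset.prod_univ_sum,
    Fintype.piFinset_univ]

lemma kron_smul (c : Fin n → ℂ) (σ : Fin n → Matrix (Fin 2) (Fin 2) ℂ) :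
    (kron fun j => c j • σ j) = (∏ j, c j) • kron σ := by
  ext v w
  simp only [kron, Matrix.smul_apply, smul_eq_mul, Finset.prod_mul_distrib]

lemma kron_one : (kron fun _ => 1 : QMat n) = 1 := by
  ext v w
  simp [kron, one_apply, Finset.prod_ite_zero, funext_iff]

lemma conjTranspose_kron (σ : Fin n → Matrix (Fin 2) (Fin 2) ℂ) :
    (kron σ)ᴴ = kron fun j => (σ j)ᴴ := by
  ext v w
  simp only [kron, conjTranspose_apply, star_prod]

lemma trace_kron (σ : Fin n → Matrix (Fin 2) (Fin 2) ℂ) :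
    (kron σ).trace = ∏ j, (σ j).trace := by
  simp only [kron, trace, diag, Finset.prod_univ_sum, Fintype.piFinset_univ]

lemma opAt_apply (j : Fin n) (a : Matrix (Fin 2) (Fin 2) ℂ) (v w : Fin n → Fin 2) :
    opAt j a v w = a (v j) (w j) * ∏ i ∈ Finset.univ.erase j, σI (v i) (w i) := by
  rw [opAt, kron, ← Finset.mul_prod_erase _ _ (Finset.mem_univ j), if_pos rfl]
  congr 1
  exact Finset.prod_congr rfl fun i hi => by rw [if_neg (Finset.ne_of_mem_erase hi)]

lemma opAt_add (j : Fin n) (a b : Matrix (Fin 2) (Fin 2) ℂ) :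
    opAt j (a + b) = opAt j a + opAt j b := by
  ext v w
  simp only [opAt_apply, Matrix.add_apply, add_mul]

lemma opAt_smul (j : Fin n) (c : ℂ) (a : Matrix (Fin 2) (Fin 2) ℂ) :
    opAt j (c • a) = c • opAt j a := by
  ext v w
  simp only [opAt_apply, Matrix.smul_apply, smul_eq_mul, mul_assoc]

lemma opAt_one (j : Fin n) : opAt j 1 = 1 := by
  simp only [opAt, σI, ite_self, kron_one]

lemma opAt_mul (j : Fin n) (a b : Matrix (Fin 2) (Fin 2) ℂ) :
    opAt j a * opAt j b = opAt j (a * b) := by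
  rw [opAt, opAt, opAt, kron_mul]
  congr 1
  funext i
  split_ifs <;> simp [σI]

lemma conjTranspose_opAt (j : Fin n) (a : Matrix (Fin 2) (Fin 2) ℂ) :
    (opAt j a)ᴴ = opAt j aᴴ := by
  rw [opAt, opAt, conjTranspose_kron]
  congr 1
  funext i
  split_ifs <;> simp [σI]

end Kronecker

section Pauli

lemma IsPauliFactor.mul_self {s : Matrix (Fin 2) (Fin 2) ℂ} (hs : IsPauliFactor s) :
    s * s = 1 := by
  rcases hs with rfl | rfl | rfl | rfl <;> simp [σI, σX, σY, σZ, one_fin_two]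

lemma IsPauliFactor.isHermitian {s : Matrix (Fin 2) (Fin 2) ℂ} (hs : IsPauliFactor s) :
    s.IsHermitian := by
  rcases hs with rfl | rfl | rfl | rfl <;> ext i j <;> fin_cases i <;> fin_cases j <;>
    simp [σI, σX, σY, σZ]

lemma IsPauliFactor.trace_eq_zero {s : Matrix (Fin 2) (Fin 2) ℂ} (hs : IsPauliFactor s)
    (h : s ≠ 1) : s.trace = 0 := by
  rcases hs with rfl | rfl | rfl | rfl
  · exact absurd rfl h
  all_goals simp [σX, σY, σZ, trace_fin_two]

lemma IsPauliFactor.exists_mul {s t : Matrix (Fin 2) (Fin 2) ℂ} (hs : IsPauliFactor s)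
    (ht : IsPauliFactor t) :
    ∃ (k : ℕ) (u : Matrix (Fin 2) (Fin 2) ℂ), IsPauliFactor u ∧ s * t = Complex.I ^ k • u := by
  have hI := Complex.I_pow_three
  by_cases hst : s = t
  · subst hst
    exact ⟨0, σI, Or.inl rfl, by rw [hs.mul_self, pow_zero, one_smul, σI]⟩
  rcases hs with rfl | rfl | rfl | rfl
  · exact ⟨0, t, ht, by simp [σI]⟩
  all_goals rcases ht with rfl | rfl | rfl | rfl
  · exact ⟨0, σX, by simp [IsPauliFactor], by simp [σI]⟩
  · exact absurd rfl hst
  · exact ⟨1, σZ, by simp [IsPauliFactor], by simp [σX, σY, σZ]⟩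
  · exact ⟨3, σY, by simp [IsPauliFactor], by simp [σX, σY, σZ, hI]⟩
  · exact ⟨0, σY, by simp [IsPauliFactor], by simp [σI]⟩
  · exact ⟨3, σZ, by simp [IsPauliFactor], by simp [σX, σY, σZ, hI]⟩
  · exact absurd rfl hst
  · exact ⟨1, σX, by simp [IsPauliFactor], by simp [σX, σY, σZ]⟩
  · exact ⟨0, σZ, by simp [IsPauliFactor], by simp [σI]⟩
  · exact ⟨1, σY, by simp [IsPauliFactor], by simp [σX, σY, σZ]⟩
  · exact ⟨3, σX, by simp [IsPauliFactor], by simp [σX, σY, σZ, hI]⟩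
  · exact absurd rfl hst

variable {n : ℕ}

lemma isPauli_I_pow_smul_kron (k : ℕ) {σ : Fin n → Matrix (Fin 2) (Fin 2) ℂ}
    (hσ : ∀ j, IsPauliFactor (σ j)) : IsPauli (Complex.I ^ k • kron σ) :=
  ⟨⟨k % 4, Nat.mod_lt k four_pos⟩, σ, hσ, by rw [← Complex.I_pow_eq_pow_mod]⟩

lemma isPauli_one : IsPauli (1 : QMat n) :=
  ⟨0, fun _ => 1, fun _ => Or.inl rfl, by simp [kron_one]⟩

lemma IsPauli.sign_smul {P : QMat n} (hP : IsPauli P) {m : ℂ} (hm : m = 1 ∨ m = -1) :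
    IsPauli (m • P) := by
  rcases hm with rfl | rfl
  · rwa [one_smul]
  · obtain ⟨k, σ, hσ, rfl⟩ := hP
    rw [← Complex.I_sq, smul_smul, ← pow_add]
    exact isPauli_I_pow_smul_kron _ hσ

lemma IsPauli.mul {P Q : QMat n} (hP : IsPauli P) (hQ : IsPauli Q) : IsPauli (P * Q) := by
  obtain ⟨k, σ, hσ, rfl⟩ := hP
  obtain ⟨l, τ, hτ, rfl⟩ := hQ
  choose e u hu he using fun j => (hσ j).exists_mul (hτ j)
  convert isPauli_I_pow_smul_kron ((l : ℕ) + k + ∑ j, e j) hu using 1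
  simp only [Matrix.smul_mul, Matrix.mul_smul, kron_mul, he, kron_smul, smul_smul,
    Finset.prod_pow_eq_pow_sum, pow_add, mul_assoc]

lemma IsPauli.mul_self {P : QMat n} (hP : IsPauli P) : P * P = 1 ∨ P * P = -1 := by
  obtain ⟨k, σ, hσ, rfl⟩ := hP
  have hsq : Complex.I ^ (k : ℕ) * Complex.I ^ (k : ℕ) = (-1) ^ (k : ℕ) := by
    rw [← mul_pow, Complex.I_mul_I]
  simp only [Matrix.smul_mul, Matrix.mul_smul, kron_mul, (hσ _).mul_self, kron_one, smul_smul, hsq]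
  rcases neg_one_pow_eq_or ℂ (k : ℕ) with h | h <;> simp [h]

lemma IsPauli.conjTranspose_mul_self {P : QMat n} (hP : IsPauli P) : Pᴴ * P = 1 := by
  obtain ⟨k, σ, hσ, rfl⟩ := hP
  simp only [conjTranspose_smul, conjTranspose_kron, (hσ _).isHermitian.eq, Matrix.smul_mul,
    Matrix.mul_smul, kron_mul, (hσ _).mul_self, kron_one, smul_smul, star_pow, ← mul_pow]
  simp

lemma IsPauli.mul_self_of_isHermitian {P : QMat n} (hP : IsPauli P) (hPH : P.IsHermitian) :
    P * P = 1 := by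
  simpa only [hPH.eq] using hP.conjTranspose_mul_self

lemma IsPauli.isHermitian_of_mul_self {P : QMat n} (hP : IsPauli P) (hPP : P * P = 1) :
    P.IsHermitian :=
  left_inv_eq_right_inv hP.conjTranspose_mul_self hPP

lemma IsPauli.commute_or_anticommute {P Q : QMat n} (hP : IsPauli P) (hQ : IsPauli Q) :
    Commute P Q ∨ Anticommute P Q :=
  commute_or_anticommute_of_mul_self hP.mul_self hQ.mul_self (hP.mul hQ).mul_self

lemma IsPauli.eq_smul_one_or_trace_eq_zero {P : QMat n} (hP : IsPauli P) :
    (∃ c : ℂ, P = c • (1 : QMat n)) ∨ P.trace = 0 := by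
  obtain ⟨k, σ, hσ, rfl⟩ := hP
  by_cases h : ∀ j, σ j = 1
  · obtain rfl : σ = fun _ => 1 := funext h
    exact Or.inl ⟨_, by rw [kron_one]⟩
  · obtain ⟨j, hj⟩ := not_forall.mp h
    right
    rw [trace_smul, trace_kron, Finset.prod_eq_zero (Finset.mem_univ j)
      ((hσ j).trace_eq_zero hj), smul_zero]

end Pauli

section Stabilizer

variable {n : ℕ} {χ : QVec n} {P Q : QMat n}

/-- The stabilizer group of `χ`, bundled as a submonoid of the operators. Inverses come for free:
its elements square to `1` when `χ ≠ 0`. -/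
def stabSubmonoid (χ : QVec n) : Submonoid (QMat n) where
  carrier := stabGroup χ
  one_mem' := ⟨isPauli_one, one_mulVec χ⟩
  mul_mem' hP hQ := ⟨hP.1.mul hQ.1, by rw [← mulVec_mulVec, hQ.2, hP.2]⟩

lemma mul_self_of_mem_stabGroup (hχ : χ ≠ 0) (hP : P ∈ stabGroup χ) : P * P = 1 := by
  refine hP.1.mul_self.resolve_right fun h => hχ (self_eq_neg.mp ?_)
  rw [← one_mulVec χ, ← neg_mulVec, ← h, one_mulVec, ← mulVec_mulVec, hP.2, hP.2]

lemma isHermitian_of_mem_stabGroup (hχ : χ ≠ 0) (hP : P ∈ stabGroup χ) : P.IsHermitian :=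
  hP.1.isHermitian_of_mul_self (mul_self_of_mem_stabGroup hχ hP)

lemma commute_of_mem_stabGroup (hχ : χ ≠ 0) (hP : P ∈ stabGroup χ) (hQ : Q ∈ stabGroup χ) :
    Commute P Q :=
  ((isHermitian_of_mem_stabGroup hχ hP).commute_iff (isHermitian_of_mem_stabGroup hχ hQ)).mpr
    (isHermitian_of_mem_stabGroup hχ ((stabSubmonoid χ).mul_mem hP hQ))

lemma trace_eq_zero_of_mem_stabGroup (hχ : χ ≠ 0) (hP : P ∈ stabGroup χ) (hP1 : P ≠ 1) :
    P.trace = 0 := by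
  refine hP.1.eq_smul_one_or_trace_eq_zero.resolve_left ?_
  rintro ⟨c, rfl⟩
  have hc : c • χ = (1 : ℂ) • χ := by simpa only [smul_mulVec, one_mulVec, one_smul] using hP.2
  exact hP1 (by rw [smul_left_injective ℂ hχ hc, one_smul])

lemma expect_one (φ : QVec n) : expect φ 1 = nrmSq φ := by
  simp [expect_apply, nrmSq, dotProduct, Complex.normSq_eq_conj_mul_self]

namespace IsStabState

lemma expect_one (hχ : IsStabState χ) : expect χ 1 = 1 := by
  rw [PaperFormal.expect_one, hχ.1, Complex.ofReal_one]

lemma ne_zero (hχ : IsStabState χ) : χ ≠ 0 := by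
  rintro rfl
  simpa [nrmSq] using hχ.1

lemma finite_stabGroup (hχ : IsStabState χ) : (stabGroup χ).Finite :=
  Set.finite_of_ncard_ne_zero (hχ.2 ▸ pow_ne_zero n two_ne_zero)

/-- The average of the stabilizer group of a stabilizer state, which turns out to be the density
matrix of the state. -/
def stabAverage (hχ : IsStabState χ) : QMat n :=
  ((2 : ℂ) ^ n)⁻¹ • ∑ S ∈ hχ.finite_stabGroup.toFinset, S

lemma card_toFinset_stabGroup (hχ : IsStabState χ) :
    (hχ.finite_stabGroup.toFinset.card : ℂ) = 2 ^ n := by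
  rw [← Set.ncard_eq_toFinset_card _ hχ.finite_stabGroup, hχ.2, Nat.cast_pow, Nat.cast_ofNat]

lemma isStarProjection_stabAverage (hχ : IsStabState χ) : IsStarProjection hχ.stabAverage where
  isIdempotentElem := by
    have hsum := sum_mul_sum_of_mul_self (G := hχ.finite_stabGroup.toFinset)
      (by simp only [Set.Finite.mem_toFinset]
          exact fun S hS R hR => (stabSubmonoid χ).mul_mem hS hR)
      (by simp only [Set.Finite.mem_toFinset]
          exact fun S hS => mul_self_of_mem_stabGroup hχ.ne_zero hS)
    rw [IsIdempotentElem, stabAverage, Matrix.smul_mul, Matrix.mul_smul, hsum,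
      ← Nat.cast_smul_eq_nsmul ℂ, hχ.card_toFinset_stabGroup,
      inv_smul_smul₀ (pow_ne_zero n two_ne_zero)]
  isSelfAdjoint := by
    rw [IsSelfAdjoint, stabAverage, star_smul, star_sum, Finset.sum_congr rfl fun S hS =>
      (isHermitian_of_mem_stabGroup hχ.ne_zero
        (hχ.finite_stabGroup.mem_toFinset.mp hS)).isSelfAdjoint.star_eq, star_inv₀, star_pow,
      star_ofNat]

lemma trace_stabAverage (hχ : IsStabState χ) : hχ.stabAverage.trace = 1 := by
  have hone : (1 : QMat n) ∈ hχ.finite_stabGroup.toFinset :=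
    hχ.finite_stabGroup.mem_toFinset.mpr (stabSubmonoid χ).one_mem
  rw [stabAverage, trace_smul, trace_sum, Finset.sum_eq_single_of_mem 1 hone fun S hS hS1 =>
    trace_eq_zero_of_mem_stabGroup hχ.ne_zero (hχ.finite_stabGroup.mem_toFinset.mp hS) hS1]
  simp

lemma stabAverage_mulVec (hχ : IsStabState χ) : hχ.stabAverage *ᵥ χ = χ := by
  rw [stabAverage, smul_mulVec, sum_mulVec, Finset.sum_congr rfl fun S hS =>
    (hχ.finite_stabGroup.mem_toFinset.mp hS).2, Finset.sum_const, ← Nat.cast_smul_eq_nsmul ℂ,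
    hχ.card_toFinset_stabGroup, inv_smul_smul₀ (pow_ne_zero n two_ne_zero)]

lemma stabAverage_eq_vecMulVec (hχ : IsStabState χ) :
    hχ.stabAverage = vecMulVec χ (star χ) :=
  eq_vecMulVec_of_isStarProjection_of_trace_eq_one hχ.isStarProjection_stabAverage
    hχ.trace_stabAverage (by simpa only [expect_apply, one_mulVec] using hχ.expect_one)
    hχ.stabAverage_mulVec

lemma exists_mulVec_eq_smul_of_expect_ne_zero (hχ : IsStabState χ) (hP : IsPauli P)
    (h : expect χ P ≠ 0) : ∃ c : ℂ, P *ᵥ χ = c • χ := by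
  rw [expect_eq_trace, ← hχ.stabAverage_eq_vecMulVec, stabAverage, Matrix.mul_smul, trace_smul,
    Matrix.mul_sum, trace_sum] at h
  obtain ⟨S, hS, hPS⟩ := Finset.exists_ne_zero_of_sum_ne_zero (right_ne_zero_of_smul h)
  rw [Set.Finite.mem_toFinset] at hS
  obtain ⟨c, hc⟩ := (hP.mul hS.1).eq_smul_one_or_trace_eq_zero.resolve_right hPS
  refine ⟨c, ?_⟩
  calc P *ᵥ χ = (P * S) *ᵥ χ := by rw [← mulVec_mulVec, hS.2]
    _ = c • χ := by rw [hc, smul_mulVec, one_mulVec]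

lemma expect_eq_zero_or_sq_eq_one (hχ : IsStabState χ) (hP : IsPauli P) (hPH : P.IsHermitian) :
    expect χ P = 0 ∨ expect χ P ^ 2 = 1 := by
  refine or_iff_not_imp_left.mpr fun h => ?_
  obtain ⟨c, hc⟩ := hχ.exists_mulVec_eq_smul_of_expect_ne_zero hP h
  rw [expect_of_mulVec_eq_smul hc, hχ.expect_one, mul_one]
  refine smul_left_injective ℂ hχ.ne_zero ?_
  calc c ^ 2 • χ = P *ᵥ P *ᵥ χ := by rw [hc, mulVec_smul, hc, smul_smul, sq]
    _ = (1 : ℂ) • χ := by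
      rw [mulVec_mulVec, hP.mul_self_of_isHermitian hPH, one_mulVec, one_smul]

end IsStabState

end Stabilizer

section PhaseGate

/-- The single-qubit phase gate `diag(1, e^{iθ})`. -/
def phaseGate (θ : ℝ) : Matrix (Fin 2) (Fin 2) ℂ :=
  !![1, 0; 0, Complex.exp (θ * Complex.I)]

lemma Tgate_eq_phaseGate : Tgate = phaseGate (Real.pi / 4) := by
  rw [Tgate, phaseGate, Complex.ofReal_div, Complex.ofReal_ofNat, div_mul_eq_mul_div]

lemma phaseGate_eq_add_smul_σZ (θ : ℝ) :
    phaseGate θ = ((1 + Complex.exp (θ * Complex.I)) / 2) • 1 +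
      ((1 - Complex.exp (θ * Complex.I)) / 2) • σZ := by
  ext a b
  fin_cases a <;> fin_cases b <;> simp [phaseGate, σZ] <;> ring

lemma conjTranspose_phaseGate (θ : ℝ) : (phaseGate θ)ᴴ = phaseGate (-θ) := by
  ext a b
  fin_cases a <;> fin_cases b <;> simp [phaseGate, ← Complex.exp_conj]

lemma phaseGate_neg_mul_self (θ : ℝ) : phaseGate (-θ) * phaseGate θ = 1 := by
  simp [phaseGate, one_fin_two, ← Complex.exp_add]

variable {n : ℕ} (j : Fin n) (θ : ℝ) {P Q : QMat n}

lemma conjTranspose_opAt_phaseGate_mul_self :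
    (opAt j (phaseGate θ))ᴴ * opAt j (phaseGate θ) = 1 := by
  rw [conjTranspose_opAt, opAt_mul, conjTranspose_phaseGate, phaseGate_neg_mul_self, opAt_one]

lemma opAt_phaseGate_eq_add_smul_σZ :
    opAt j (phaseGate θ) = ((1 + Complex.exp (θ * Complex.I)) / 2) • 1 +
      ((1 - Complex.exp (θ * Complex.I)) / 2) • opAt j σZ := by
  rw [phaseGate_eq_add_smul_σZ, opAt_add, opAt_smul, opAt_smul, opAt_one]

lemma commute_opAt_phaseGate (hQ : Commute (opAt j σZ) Q) :
    Commute (opAt j (phaseGate θ)) Q := by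
  rw [opAt_phaseGate_eq_add_smul_σZ]
  exact ((Commute.one_left Q).smul_left _).add_left (hQ.smul_left _)

lemma opAt_phaseGate_conj_of_anticommute (hP : Anticommute (opAt j σZ) P) :
    (opAt j (phaseGate θ))ᴴ * P * opAt j (phaseGate θ) =
      Complex.cos θ • P - (Complex.I * Complex.sin θ) • (P * opAt j σZ) := by
  have hZZ : opAt j σZ * opAt j σZ = 1 := by
    rw [opAt_mul, IsPauliFactor.mul_self (by simp [IsPauliFactor]), opAt_one]
  rw [conjTranspose_opAt, conjTranspose_phaseGate, opAt_phaseGate_eq_add_smul_σZ,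
    opAt_phaseGate_eq_add_smul_σZ, Complex.cos, Complex.sin]
  simp only [Matrix.add_mul, Matrix.mul_add, Matrix.smul_mul, Matrix.mul_smul, Matrix.one_mul,
    Matrix.mul_one, show opAt j σZ * P = -(P * opAt j σZ) from hP, Matrix.neg_mul,
    Matrix.mul_assoc, hZZ, Complex.ofReal_neg]
  match_scalars
  · ring
  · linear_combination
      ((Complex.exp (-θ * Complex.I) - Complex.exp (θ * Complex.I)) / 2) * Complex.I_sq

lemma expect_opAt_phaseGate {ψ : QVec n} (hP : P ∈ stabGroup ψ)
    (hZP : Anticommute (opAt j σZ) P) :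
    expect (opAt j (phaseGate θ) *ᵥ ψ) P = Complex.cos θ * expect ψ 1 := by
  have hPZ : expect ψ (P * opAt j σZ) = 0 :=
    expect_eq_zero_of_anticommute hP.1.conjTranspose_mul_self hP.2
      (hZP.mul_left_of_commute (Commute.refl P))
  have hfix : P *ᵥ ψ = (1 : ℂ) • ψ := by rw [hP.2, one_smul]
  rw [expect_mulVec, opAt_phaseGate_conj_of_anticommute j θ hZP, map_sub, map_smul, map_smul, hPZ,
    expect_of_mulVec_eq_smul hfix, smul_zero, sub_zero, one_mul, smul_eq_mul]

lemma expect_projection_opAt_phaseGate {ψ : QVec n} {N : QMat n} (hN : N.IsHermitian)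
    (hNN : N * N = 1) (hQ : Q ∈ stabGroup ψ) (hZQ : Commute (opAt j σZ) Q)
    (hNQ : Anticommute N Q) (hP : P ∈ stabGroup ψ) (hZP : Anticommute (opAt j σZ) P)
    (hPQ : Commute P Q) (hNP : Commute N P) :
    expect (((2 : ℂ)⁻¹ • (1 + N)) *ᵥ (opAt j (phaseGate θ) *ᵥ ψ)) P =
      Complex.cos θ * expect (((2 : ℂ)⁻¹ • (1 + N)) *ᵥ (opAt j (phaseGate θ) *ᵥ ψ)) 1 := by
  have hQφ : Q *ᵥ (opAt j (phaseGate θ) *ᵥ ψ) = opAt j (phaseGate θ) *ᵥ ψ := by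
    rw [mulVec_mulVec, ← (commute_opAt_phaseGate j θ hZQ).eq, ← mulVec_mulVec, hQ.2]
  have hnorm : expect (opAt j (phaseGate θ) *ᵥ ψ) 1 = expect ψ 1 := by
    rw [expect_mulVec, Matrix.mul_one, conjTranspose_opAt_phaseGate_mul_self]
  have hQQ := hQ.1.conjTranspose_mul_self
  rw [expect_projection hN hNN hQQ hQφ hNQ hPQ hNP,
    expect_projection hN hNN hQQ hQφ hNQ (Commute.one_left Q) (Commute.one_right N),
    expect_opAt_phaseGate j θ hP hZP, hnorm, mul_left_comm]

end PhaseGate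

lemma exists_mem_stabGroup_anticommute_and_commute {n : ℕ} {ψ : QVec n} {Z M S Q : QMat n}
    (hS : S ∈ stabGroup ψ) (hZS : Anticommute Z S) (hQ : Q ∈ stabGroup ψ) (hZQ : Commute Z Q)
    (hM : IsPauli M) (hMQ : Anticommute M Q) :
    ∃ P ∈ stabGroup ψ, Anticommute Z P ∧ Commute M P := by
  rcases hM.commute_or_anticommute hS.1 with hMS | hMS
  · exact ⟨S, hS, hZS, hMS⟩
  · exact ⟨S * Q, (stabSubmonoid ψ).mul_mem hS hQ, hZS.mul_right_of_commute hZQ,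
      hMS.mul_right hMQ⟩

lemma mem_stabGroup_and_commute_of_mem_closure {n : ℕ} {ψ : QVec n} {Z Q : QMat n}
    {s : Set (QMat n)} (hs : ∀ S ∈ s, S ∈ stabGroup ψ ∧ Commute Z S)
    (hQ : Q ∈ Submonoid.closure s) : Q ∈ stabGroup ψ ∧ Commute Z Q := by
  have hle : Submonoid.closure s ≤ stabSubmonoid ψ ⊓ Submonoid.centralizer {Z} :=
    Submonoid.closure_le.mpr fun S hS =>
      ⟨(hs S hS).1, Submonoid.mem_centralizer_iff.mpr (by rintro _ rfl; exact (hs S hS).2)⟩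
  exact ⟨(hle hQ).1, Submonoid.mem_centralizer_iff.mp (hle hQ).2 Z rfl⟩

theorem anticommuting_monitor_no_purification_general {n : ℕ} (j : Fin n) {θ : ℝ}
    (hθ : Real.sin (2 * θ) ≠ 0) {ψ : QVec n} {S Q M : QMat n}
    (hS : S ∈ stabGroup ψ) (hZS : Anticommute (opAt j σZ) S)
    (hQ : Q ∈ stabGroup ψ) (hZQ : Commute (opAt j σZ) Q)
    (hM : IsPauli M) (hMH : M.IsHermitian) (hMQ : Anticommute M Q) (c : ℂ) :
    ¬ IsStabState (c • ((2 : ℂ)⁻¹ • (1 + M)) *ᵥ (opAt j (phaseGate θ) *ᵥ ψ)) := by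
  intro hχ
  have hψ : ψ ≠ 0 := by
    rintro rfl
    exact hχ.ne_zero (by simp only [mulVec_zero, smul_zero])
  obtain ⟨P, hP, hZP, hMP⟩ := exists_mem_stabGroup_anticommute_and_commute hS hZS hQ hZQ hM hMQ
  have hcos : expect (c • ((2 : ℂ)⁻¹ • (1 + M)) *ᵥ (opAt j (phaseGate θ) *ᵥ ψ)) P = Real.cos θ := by
    rw [expect_smul_left, expect_projection_opAt_phaseGate j θ hMH
      (hM.mul_self_of_isHermitian hMH) hQ hZQ hMQ hP hZP (commute_of_mem_stabGroup hψ hP hQ) hMP,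
      mul_left_comm, ← expect_smul_left, hχ.expect_one, mul_one, Complex.ofReal_cos]
  have hvalue := hχ.expect_eq_zero_or_sq_eq_one hP.1 (isHermitian_of_mem_stabGroup hψ hP)
  rw [hcos] at hvalue
  norm_cast at hvalue
  rw [Real.sin_two_mul, mul_ne_zero_iff, mul_ne_zero_iff] at hθ
  refine hvalue.elim hθ.2 fun hsq => hθ.1.2 (pow_eq_zero_iff two_ne_zero |>.mp ?_)
  linear_combination Real.sin_sq_add_cos_sq θ - hsq

/-- **A monitor anticommuting with a code stabilizer does not purify** (App. B 2):
in the setting of a single `T` gate applied to stabilizer state `ψ` (with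
generating set `s_1 = g 0, g_2, …, g_n` as below and `𝒢 = ⟨g_2,…,g_n⟩`), if the
Hermitian Pauli `M` anticommutes with some element of `𝒢`, then for either
outcome `m = ±1` with `Πφ ≠ 0` (`Π = (I + mM)/2`, `φ = T_1ψ`), the normalized
post-measurement state is not a stabilizer state. -/
theorem anticommuting_monitor_no_purification {n : ℕ} [NeZero n]
    (ψ : QVec n) (hψ : IsStabState ψ)
    (g : Fin n → QMat n) (hg : IsIndepGenSet ψ g)
    (hanti : opAt (0 : Fin n) σZ * g 0 = -(g 0 * opAt (0 : Fin n) σZ))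
    (hcomm : ∀ i : Fin n, i ≠ 0 →
      opAt (0 : Fin n) σZ * g i = g i * opAt (0 : Fin n) σZ)
    (M : QMat n) (hMP : IsPauli M) (hMH : M.IsHermitian)
    (hManti : ∃ Q ∈ Submonoid.closure {Q : QMat n | ∃ i : Fin n, i ≠ 0 ∧ Q = g i},
      M * Q = -(Q * M))
    (m : ℂ) (hm : m = 1 ∨ m = -1)
    (hne : ((2 : ℂ)⁻¹ • ((1 : QMat n) + m • M)).mulVec
        ((opAt (0 : Fin n) Tgate).mulVec ψ) ≠ 0) :
    ¬ IsStabState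
        ((Real.sqrt (nrmSq (((2 : ℂ)⁻¹ • ((1 : QMat n) + m • M)).mulVec
            ((opAt (0 : Fin n) Tgate).mulVec ψ))))⁻¹ •
          ((2 : ℂ)⁻¹ • ((1 : QMat n) + m • M)).mulVec
            ((opAt (0 : Fin n) Tgate).mulVec ψ)) := by
  obtain ⟨Q, hQ, hMQ⟩ := hManti
  obtain ⟨hQψ, hZQ⟩ := mem_stabGroup_and_commute_of_mem_closure (ψ := ψ) (Z := opAt 0 σZ)
    (by rintro _ ⟨i, hi, rfl⟩; exact ⟨hg.1 i, hcomm i hi⟩) hQ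
  have hθ : Real.sin (2 * (Real.pi / 4)) ≠ 0 := by
    rw [show 2 * (Real.pi / 4) = Real.pi / 2 by ring, Real.sin_pi_div_two]
    exact one_ne_zero
  have hmH : IsSelfAdjoint m := by rcases hm with rfl | rfl <;> simp [IsSelfAdjoint]
  rw [Tgate_eq_phaseGate, ← Complex.coe_smul]
  exact anticommuting_monitor_no_purification_general 0 hθ (hg.1 0) hanti hQψ hZQ
    (hMP.sign_smul hm) (hMH.smul hmH) (Anticommute.smul_left hMQ m) _

end PaperFormal
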